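/- arXiv:2402.02553 — 8 statements merged into one kernel-verified Lean document; each statement's English description precedes it below -/
import Mathlib

section
/- For every integer n, the identity q^{−2n+1} + q^{−2n−1} + q^{−2n−3} − q^{−6n−3} = q + q^{−1} holds in the ring of Laurent polynomials ℤ[q, q^{−1}] if and only if n = 0 or n = −1. Equivalently, the Jones polynomial J(q) = (q^{−2n+1} + q^{−2n−1} + q^{−2n−3} − q^{−6n−3})/(q + q^{−1}) of the closure of the two-strand braid σ₁^{2n+1} equals 1 exactly when n = 0 or n = −1, so no non-trivial two-strand knot has trivial Jones polynomial. -/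
open LaurentPolynomial

/-- The identity `q^{−2n+1} + q^{−2n−1} + q^{−2n−3} − q^{−6n−3} = q + q^{−1}` holds in
`ℤ[q, q^{−1}]` (writing `T k` for the Laurent monomial `q^k`) if and only if `n = 0` or
`n = −1`; i.e. the closure of the two-strand braid `σ₁^{2n+1}` has trivial Jones
polynomial exactly for the two diagrams of the unknot. -/
theorem stmt5 (n : ℤ) :
    (T (-2 * n + 1) + T (-2 * n - 1) + T (-2 * n - 3) - T (-6 * n - 3) :
        LaurentPolynomial ℤ) = T 1 + T (-1) ↔ n = 0 ∨ n = -1 := by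
  constructor
  · intro h
    have h1 := congrArg (fun p : LaurentPolynomial ℤ => p.coeff 1) h
    have h2 := congrArg (fun p : LaurentPolynomial ℤ => p.coeff (-1)) h
    simp only [AddMonoidAlgebra.coeff_add, AddMonoidAlgebra.coeff_sub, Finsupp.add_apply, Finsupp.sub_apply, T_apply] at h1 h2
    split_ifs at h1 h2 <;> omega
  · rintro (rfl | rfl)
    · norm_num
    · norm_num
      abel
end

section
/- For every natural number m and all real numbers q and A with q > 0, q ≠ 1 and A ≠ 0, the real-valued identity F̄_m(q, A) = A^{−8} · F_m(q^{−1}, A^{−1}) holds, and consequently 1 + P(q^{−1}, A^{−1}) · F_m(q^{−1}, A^{−1}) = 1 + P(q, A) · F̄_m(q, A). In other words, the candidate HOMFLY-PT polynomial built from F̄_m is obtained from the one built from F_m by the mirror transformation (q, A) ↦ (q^{−1}, A^{−1}), so the hypothetical knots K̄_m are the mirror images of the knots K_m. -/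
/-- The real quantum integer `[n]_q = (q^n − q^{−n})/(q − q^{−1})`. -/
noncomputable def qint (q : ℝ) (n : ℤ) : ℝ := (q ^ n - q ^ (-n)) / (q - q⁻¹)

/-- `φ_{2j}(q) = −[2j+4]_q[j+3]_q[j+1]_q/([3]_q[4]_q)`. -/
noncomputable def φc (q : ℝ) (j : ℕ) : ℝ :=
  -(qint q (2 * j + 4) * qint q (j + 3) * qint q (j + 1)) / (qint q 3 * qint q 4)

/-- `P(q, A) = (A² − q²)(A² − q⁴)(A² − q^{−2})(A² − q^{−4})`. -/
noncomputable def Pr (q A : ℝ) : ℝ :=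
  (A ^ 2 - q ^ 2) * (A ^ 2 - q ^ 4) * (A ^ 2 - q ^ (-2 : ℤ)) * (A ^ 2 - q ^ (-4 : ℤ))

/-- `F̄_m(q, A) = Σ_{j=0}^m φ_{2j}(q) A^{2j}`. -/
noncomputable def Fbar (m : ℕ) (q A : ℝ) : ℝ :=
  ∑ j ∈ Finset.range (m + 1), φc q j * A ^ (2 * j)

/-- `F_m(q, A) = Σ_{j=0}^m φ_{2j}(q) A^{−2j−8}`. -/
noncomputable def Fm (m : ℕ) (q A : ℝ) : ℝ :=
  ∑ j ∈ Finset.range (m + 1), φc q j * A ^ (-(2 * (j : ℤ)) - 8)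

lemma qint_inv (q : ℝ) (n : ℤ) : qint q⁻¹ n = qint q n := by
  unfold qint
  rw [inv_zpow', inv_zpow', inv_inv, neg_neg, ← neg_sub (q ^ n), ← neg_sub q, neg_div_neg_eq]

lemma φc_inv (q : ℝ) (j : ℕ) : φc q⁻¹ j = φc q j := by
  simp only [φc, qint_inv]

lemma Fm_inv (m : ℕ) (q A : ℝ) (hA : A ≠ 0) : Fm m q⁻¹ A⁻¹ = A ^ 8 * Fbar m q A := by
  unfold Fm Fbar
  rw [Finset.mul_sum]
  refine Finset.sum_congr rfl fun j _ => ?_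
  have h : (A⁻¹) ^ (-(2 * (j : ℤ)) - 8) = A ^ (2 * j + 8) := by
    rw [inv_zpow', ← zpow_natCast]
    congr 1
    push_cast
    ring
  rw [φc_inv, h, pow_add]
  ring

lemma Pr_inv (q A : ℝ) (hq : q ≠ 0) (hA : A ≠ 0) : Pr q⁻¹ A⁻¹ * A ^ 8 = Pr q A := by
  have h2 : ∀ x : ℝ, x ^ (-2 : ℤ) = (x ^ 2)⁻¹ := fun x => by
    rw [zpow_neg]; norm_cast
  have h4 : ∀ x : ℝ, x ^ (-4 : ℤ) = (x ^ 4)⁻¹ := fun x => by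
    rw [zpow_neg]; norm_cast
  unfold Pr
  rw [h2, h2, h4, h4]
  field_simp
  ring

/-- The mirror relation: `F̄_m(q, A) = A^{−8}·F_m(q^{−1}, A^{−1})`, hence the candidate
HOMFLY-PT polynomial built from `F̄_m` is the mirror image `(q, A) ↦ (q^{−1}, A^{−1})`
of the one built from `F_m`. -/
theorem stmt7 (m : ℕ) (q A : ℝ) (hq : 0 < q) (hq1 : q ≠ 1) (hA : A ≠ 0) :
    Fbar m q A = A ^ (-8 : ℤ) * Fm m q⁻¹ A⁻¹ ∧
    1 + Pr q⁻¹ A⁻¹ * Fm m q⁻¹ A⁻¹ = 1 + Pr q A * Fbar m q A := by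
  have h8 : A ^ (-8 : ℤ) = (A ^ 8)⁻¹ := by
    rw [zpow_neg]; norm_cast
  rw [Fm_inv m q A hA]
  refine ⟨?_, ?_⟩
  · rw [h8, inv_mul_cancel_left₀ (pow_ne_zero 8 hA)]
  · rw [← mul_assoc, Pr_inv q A hq.ne' hA]
end

section
/- Fix an integer n ≥ 2 and, for 1 ≤ i ≤ n−1, let ρ_i be the n×n matrix over the ring LaurentPolynomial ℤ (in the variable q) that agrees with the identity matrix except in rows and columns i, i+1, where (ρ_i)_{i,i} = 1 − q², (ρ_i)_{i,i+1} = q², (ρ_i)_{i+1,i} = 1, (ρ_i)_{i+1,i+1} = 0. Then the unreduced Burau matrices satisfy the braid group relations: ρ_i ρ_{i+1} ρ_i = ρ_{i+1} ρ_i ρ_{i+1} for 1 ≤ i ≤ n−2, and ρ_i ρ_j = ρ_j ρ_i whenever |i − j| ≥ 2. -/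
open LaurentPolynomial

/-- The unreduced Burau matrix `ρ_i` (1-based index `i`, `1 ≤ i ≤ n−1`): it agrees with
the `n×n` identity matrix except in rows and columns `i`, `i+1` (which are the 0-based
positions `i−1`, `i`), where the `2×2` block is `[[1−q², q²], [1, 0]]`; here `q = T 1`. -/
noncomputable def burau (n i : ℕ) : Matrix (Fin n) (Fin n) (LaurentPolynomial ℤ) :=
  Matrix.of fun a b =>
    if (a : ℕ) + 1 = i ∧ (b : ℕ) + 1 = i then 1 - T 1 ^ 2
    else if (a : ℕ) + 1 = i ∧ (b : ℕ) = i then T 1 ^ 2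
    else if (a : ℕ) = i ∧ (b : ℕ) + 1 = i then 1
    else if (a : ℕ) = i ∧ (b : ℕ) = i then 0
    else if (a : ℕ) = (b : ℕ) then 1 else 0

/-- The difference `ρ - 1` as a combination of matrix units. -/
noncomputable def bur (n : ℕ) (p r : Fin n) : Matrix (Fin n) (Fin n) (LaurentPolynomial ℤ) :=
  Matrix.vecMulVec (Pi.single r 1 - Pi.single p (T 1 ^ 2)) (Pi.single p 1 - Pi.single r 1)

theorem burau_eq (n i : ℕ) (h : i + 1 < n) :
    burau n (i + 1) = 1 + bur n ⟨i, by omega⟩ ⟨i + 1, h⟩ := by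
  ext1 a b
  obtain ⟨a, ha⟩ := a
  obtain ⟨b, hb⟩ := b
  simp only [burau, bur, Matrix.of_apply, Matrix.add_apply, Matrix.one_apply, Matrix.vecMulVec_apply,
    Pi.sub_apply, Pi.single_apply, Fin.mk.injEq]
  split_ifs <;> first | omega | ring

theorem bur_mul (n : ℕ) (p r s t : Fin n) :
    bur n p r * bur n s t =
      ((Pi.single p 1 - Pi.single r 1 : Fin n → LaurentPolynomial ℤ) ⬝ᵥ
        (Pi.single t 1 - Pi.single s (T 1 ^ 2))) •
      Matrix.vecMulVec (Pi.single r 1 - Pi.single p (T 1 ^ 2))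
        (Pi.single s 1 - Pi.single t 1) := by
  rw [bur, bur, Matrix.vecMulVec_mul_vecMulVec, Matrix.vecMulVec_smul]

theorem bur_sq (n : ℕ) (p r : Fin n) (h : p ≠ r) :
    bur n p r * bur n p r = (- (1 + T 1 ^ 2) : LaurentPolynomial ℤ) • bur n p r := by
  rw [bur_mul, bur]
  congr 1
  simp [sub_dotProduct, dotProduct_sub, h, h.symm]
  ring

theorem bur_aba (n : ℕ) (p r s : Fin n) (h : p ≠ r) (h' : r ≠ s) (h2 : p ≠ s) :
    bur n p r * bur n r s * bur n p r = (T 1 ^ 2 : LaurentPolynomial ℤ) • bur n p r := by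
  rw [bur_mul, Matrix.smul_mul, bur, Matrix.vecMulVec_mul_vecMulVec, Matrix.vecMulVec_smul, smul_smul]
  congr 1
  simp [sub_dotProduct, dotProduct_sub, h, h.symm, h', h'.symm, h2, h2.symm]

theorem bur_bab (n : ℕ) (p r s : Fin n) (h : p ≠ r) (h' : r ≠ s) (h2 : p ≠ s) :
    bur n r s * bur n p r * bur n r s = (T 1 ^ 2 : LaurentPolynomial ℤ) • bur n r s := by
  rw [bur_mul, Matrix.smul_mul, bur, Matrix.vecMulVec_mul_vecMulVec, Matrix.vecMulVec_smul, smul_smul]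
  congr 1
  simp [sub_dotProduct, dotProduct_sub, h, h.symm, h', h'.symm, h2, h2.symm]

theorem bur_far (n : ℕ) (p r s t : Fin n) (h1 : p ≠ s) (h2 : p ≠ t) (h3 : r ≠ s) (h4 : r ≠ t) :
    bur n p r * bur n s t = 0 := by
  rw [bur_mul]
  simp [sub_dotProduct, dotProduct_sub, h1, h2, h3, h4, h1.symm, h2.symm, h3.symm, h4.symm]

theorem braid_aux {n : ℕ} (A B : Matrix (Fin n) (Fin n) (LaurentPolynomial ℤ))
    (c d : LaurentPolynomial ℤ) (hcd : c + d = -1)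
    (hA : A * A = c • A) (hB : B * B = c • B)
    (hABA : A * B * A = d • A) (hBAB : B * A * B = d • B) :
    (1 + A) * (1 + B) * (1 + A) = (1 + B) * (1 + A) * (1 + B) := by
  have key : ∀ X Y : Matrix (Fin n) (Fin n) (LaurentPolynomial ℤ),
      X * X = c • X → X * Y * X = d • X →
      (1 + X) * (1 + Y) * (1 + X) = 1 + X + Y + X * Y + Y * X := by
    intro X Y h1 h2
    have h3 : X * X + X * Y * X = -X := by
      rw [h1, h2, ← add_smul, hcd, neg_one_smul]
    calc (1 + X) * (1 + Y) * (1 + X)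
        = 1 + X + X + Y + X * Y + Y * X + (X * X + X * Y * X) := by noncomm_ring
      _ = _ := by rw [h3]; abel
  rw [key A B hA hABA, key B A hB hBAB]
  abel

/-- The unreduced Burau matrices satisfy the braid group relations of `B_n`. -/
theorem stmt10 (n : ℕ) (hn : 2 ≤ n) :
    (∀ i : ℕ, 1 ≤ i → i ≤ n - 2 →
      burau n i * burau n (i + 1) * burau n i =
        burau n (i + 1) * burau n i * burau n (i + 1)) ∧
    (∀ i j : ℕ, 1 ≤ i → i ≤ n - 1 → 1 ≤ j → j ≤ n - 1 → (i + 2 ≤ j ∨ j + 2 ≤ i) →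
      burau n i * burau n j = burau n j * burau n i) := by
  constructor
  · intro i h1 h2
    obtain ⟨k, rfl⟩ : ∃ k, i = k + 1 := ⟨i - 1, by omega⟩
    rw [burau_eq n k (by omega), burau_eq n (k + 1) (by omega)]
    apply braid_aux _ _ (-(1 + T 1 ^ 2)) (T 1 ^ 2) (by ring)
    · apply bur_sq; simp
    · apply bur_sq; simp
    · apply bur_aba <;> simp only [ne_eq, Fin.mk.injEq] <;> omega
    · apply bur_bab <;> simp only [ne_eq, Fin.mk.injEq] <;> omega
  · intro i j h1 h2 h3 h4 h
    obtain ⟨k, rfl⟩ : ∃ k, i = k + 1 := ⟨i - 1, by omega⟩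
    obtain ⟨l, rfl⟩ : ∃ l, j = l + 1 := ⟨j - 1, by omega⟩
    rw [burau_eq n k (by omega), burau_eq n l (by omega)]
    rw [add_mul, add_mul, mul_add, mul_add, mul_add, mul_add, bur_far, bur_far]
    · simp only [one_mul, mul_one]; abel
    all_goals simp only [ne_eq, Fin.mk.injEq]; omega
end

section
/- Fix an integer n ≥ 3 and, for 1 ≤ i ≤ n−1, let b_i be the (n−1)×(n−1) matrix over the ring LaurentPolynomial ℤ (in the variable q) that agrees with the identity matrix except: (b_i)_{i,i} = −q²; (b_i)_{i,i−1} = q² when i ≥ 2; and (b_i)_{i,i+1} = 1 when i ≤ n−2. (So b_1 has top-left 2×2 block [[−q², 1], [0, 1]], b_{n−1} has bottom-right 2×2 block [[1, 0], [q², −q²]], and for 2 ≤ i ≤ n−2 the row i of b_i is (…, q², −q², 1, …) in columns i−1, i, i+1.) Then the reduced Burau matrices satisfy the braid group relations: b_i b_{i+1} b_i = b_{i+1} b_i b_{i+1} for 1 ≤ i ≤ n−2, and b_i b_j = b_j b_i whenever |i − j| ≥ 2. -/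
open LaurentPolynomial

/-- The reduced Burau matrix `b_i` (1-based index `i`, `1 ≤ i ≤ n−1`): an
`(n−1)×(n−1)` matrix agreeing with the identity except in (1-based) row `i`, where the
entries in columns `i−1`, `i`, `i+1` are `q²`, `−q²`, `1` (the first only when `i ≥ 2`,
the last only when `i ≤ n−2`); here `q = T 1` and rows/columns are 0-based `Fin (n−1)`. -/
noncomputable def rburau (n i : ℕ) : Matrix (Fin (n - 1)) (Fin (n - 1)) (LaurentPolynomial ℤ) :=
  Matrix.of fun a b =>
    if (a : ℕ) + 1 = i then
      if (b : ℕ) + 1 = i then -(T 1 ^ 2)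
      else if (b : ℕ) + 2 = i then T 1 ^ 2
      else if (b : ℕ) = i then 1
      else 0
    else if (a : ℕ) = (b : ℕ) then 1 else 0

/-- `rburau n i` minus the identity has only row `i` nonzero, so products collapse. -/
lemma rburau_sub_one_apply (n i : ℕ) (a b : Fin (n - 1)) :
    (rburau n i - 1) a b =
      if (a : ℕ) + 1 = i then
        if (b : ℕ) + 1 = i then -(T 1 ^ 2) - 1
        else if (b : ℕ) + 2 = i then T 1 ^ 2
        else if (b : ℕ) = i then 1
        else 0
      else 0 := by
  simp only [rburau, Matrix.sub_apply, Matrix.of_apply, Matrix.one_apply, Fin.ext_iff]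
  split_ifs <;> first | omega | simp

lemma rburau_sub_one_mul (n i j : ℕ) (hj : 1 ≤ j) (hj' : j ≤ n - 1) :
    (rburau n i - 1) * (rburau n j - 1) =
      Matrix.of fun a c => (rburau n i - 1) a ⟨j - 1, by omega⟩ *
        (rburau n j - 1) ⟨j - 1, by omega⟩ c := by
  ext1 a c
  rw [Matrix.mul_apply, Matrix.of_apply]
  apply Finset.sum_eq_single
  · intro b _ hb
    rw [rburau_sub_one_apply n j b c, if_neg, mul_zero]
    intro h
    apply hb
    ext
    simp only
    omega
  · simp

lemma rburau_sq (n i : ℕ) (hi : 1 ≤ i) (hi' : i ≤ n - 1) :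
    (rburau n i - 1) * (rburau n i - 1) =
      (-(T 1 ^ 2) - 1 : LaurentPolynomial ℤ) • (rburau n i - 1) := by
  rw [rburau_sub_one_mul n i i hi hi']
  ext1 a c
  simp only [Matrix.of_apply, Matrix.smul_apply, rburau_sub_one_apply, smul_eq_mul]
  split_ifs <;> first | omega | simp

lemma rburau_far (n i j : ℕ) (hj : 1 ≤ j) (hj' : j ≤ n - 1)
    (h : i + 2 ≤ j ∨ j + 2 ≤ i) :
    (rburau n i - 1) * (rburau n j - 1) = 0 := by
  rw [rburau_sub_one_mul n i j hj hj']
  ext1 a c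
  simp only [Matrix.of_apply, Matrix.zero_apply, rburau_sub_one_apply]
  split_ifs <;> first | omega | simp

lemma rburau_triple (n i j : ℕ) (hi : 1 ≤ i) (hi' : i ≤ n - 1) (hj : 1 ≤ j) (hj' : j ≤ n - 1)
    (h : j = i + 1 ∨ i = j + 1) :
    (rburau n i - 1) * (rburau n j - 1) * (rburau n i - 1) =
      (T 1 ^ 2 : LaurentPolynomial ℤ) • (rburau n i - 1) := by
  rw [mul_assoc, rburau_sub_one_mul n j i hi hi']
  ext1 a c
  rw [Matrix.mul_apply, Finset.sum_eq_single (⟨j - 1, by omega⟩ : Fin (n - 1))]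
  · simp only [Matrix.of_apply, Matrix.smul_apply, rburau_sub_one_apply, smul_eq_mul]
    split_ifs <;> first | omega | simp
  · intro b _ hb
    rw [Matrix.of_apply, rburau_sub_one_apply n j b, if_neg, zero_mul, mul_zero]
    intro h
    apply hb
    ext
    simp only
    omega
  · simp

/-- Abstract braid relation for `1 + A`, `1 + B`. -/
lemma braid_half {R M : Type*} [CommRing R] [Ring M] [Algebra R M] (t : R) (x y : M)
    (h1 : (x - 1) * (x - 1) = (-t - 1) • (x - 1))
    (h2 : (x - 1) * (y - 1) * (x - 1) = t • (x - 1)) :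
    x * y * x = 1 + (x - 1) + (y - 1) + (x - 1) * (y - 1) + (y - 1) * (x - 1) := by
  have e : x * y * x = 1 + 2 * (x - 1) + (y - 1) + (x - 1) * (y - 1) + (y - 1) * (x - 1)
      + (x - 1) * (x - 1) + (x - 1) * (y - 1) * (x - 1) := by noncomm_ring
  rw [e, h1, h2, sub_smul, neg_smul, one_smul]
  noncomm_ring

/-- The reduced Burau matrices satisfy the braid group relations of `B_n`. -/
theorem stmt11 (n : ℕ) (hn : 3 ≤ n) :
    (∀ i : ℕ, 1 ≤ i → i ≤ n - 2 →
      rburau n i * rburau n (i + 1) * rburau n i =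
        rburau n (i + 1) * rburau n i * rburau n (i + 1)) ∧
    (∀ i j : ℕ, 1 ≤ i → i ≤ n - 1 → 1 ≤ j → j ≤ n - 1 → (i + 2 ≤ j ∨ j + 2 ≤ i) →
      rburau n i * rburau n j = rburau n j * rburau n i) := by
  constructor
  · intro i hi hi'
    have hs1 := rburau_sq n i hi (by omega)
    have hs2 := rburau_sq n (i + 1) (by omega) (by omega)
    have ht1 := rburau_triple n i (i + 1) hi (by omega) (by omega) (by omega) (by omega)
    have ht2 := rburau_triple n (i + 1) i (by omega) (by omega) hi (by omega) (by omega)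
    rw [braid_half _ _ _ hs1 ht1, braid_half _ _ _ hs2 ht2]
    abel
  · intro i j hi hi' hj hj' h
    have h1 := rburau_far n i j hj hj' h
    have h2 := rburau_far n j i hi hi' h.symm
    have e : rburau n i * rburau n j - rburau n j * rburau n i =
        (rburau n i - 1) * (rburau n j - 1) - (rburau n j - 1) * (rburau n i - 1) := by
      noncomm_ring
    rw [h1, h2, sub_zero] at e
    exact sub_eq_zero.mp e
end

section
/- For every real number q > 0, the 3×3 matrices R₁^{[3,1]}(q), R₂^{[3,1]}(q), R₃^{[3,1]}(q) defined in the context satisfy the Yang–Baxter (braid) relations R₁R₂R₁ = R₂R₁R₂ and R₂R₃R₂ = R₃R₂R₃, together with far commutativity R₁R₃ = R₃R₁. -/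
/-- `[2]_q = q + q^{−1}`. -/
noncomputable def tw (q : ℝ) : ℝ := q + q⁻¹

/-- `[3]_q = q² + 1 + q^{−2}`. -/
noncomputable def th (q : ℝ) : ℝ := q ^ 2 + 1 + (q⁻¹) ^ 2

/-- `R₁^{[3,1]}(q) = diag(q, q, −q^{−1})`. -/
noncomputable def R1_31 (q : ℝ) : Matrix (Fin 3) (Fin 3) ℝ :=
  !![q, 0, 0; 0, q, 0; 0, 0, -q⁻¹]

/-- `R₂^{[3,1]}(q)`. -/
noncomputable def R2_31 (q : ℝ) : Matrix (Fin 3) (Fin 3) ℝ :=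
  !![q, 0, 0;
     0, -1 / (q ^ 2 * tw q), -Real.sqrt (th q) / tw q;
     0, -Real.sqrt (th q) / tw q, q ^ 2 / tw q]

/-- `R₃^{[3,1]}(q)`. -/
noncomputable def R3_31 (q : ℝ) : Matrix (Fin 3) (Fin 3) ℝ :=
  !![-1 / (q ^ 3 * th q), -(tw q) * Real.sqrt (q ^ 2 + (q⁻¹) ^ 2) / th q, 0;
     -(tw q) * Real.sqrt (q ^ 2 + (q⁻¹) ^ 2) / th q, q ^ 3 / th q, 0;
     0, 0, q]

/-- The `[3,1]`-blocks of the fundamental Reshetikhin–Turaev representation of `B₄`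
satisfy the Yang–Baxter (braid) relations and far commutativity. -/
theorem stmt12 (q : ℝ) (hq : 0 < q) :
    R1_31 q * R2_31 q * R1_31 q = R2_31 q * R1_31 q * R2_31 q ∧
    R2_31 q * R3_31 q * R2_31 q = R3_31 q * R2_31 q * R3_31 q ∧
    R1_31 q * R3_31 q = R3_31 q * R1_31 q := by
  obtain ⟨S, hS, hS2⟩ : ∃ S : ℝ, Real.sqrt (th q) = S / q ∧ S ^ 2 = q ^ 4 + q ^ 2 + 1 := by
    refine ⟨Real.sqrt (th q) * q, by field_simp, ?_⟩
    rw [mul_pow, Real.sq_sqrt (by unfold th; positivity)]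
    unfold th; field_simp
  obtain ⟨T, hT, hT2⟩ : ∃ T : ℝ, Real.sqrt (q ^ 2 + (q⁻¹) ^ 2) = T / q ∧ T ^ 2 = q ^ 4 + 1 := by
    refine ⟨Real.sqrt (q ^ 2 + (q⁻¹) ^ 2) * q, by field_simp, ?_⟩
    rw [mul_pow, Real.sq_sqrt (by positivity)]
    field_simp
  have htw : tw q = (q ^ 2 + 1) / q := by unfold tw; field_simp
  have hth : th q = (q ^ 4 + q ^ 2 + 1) / q ^ 2 := by unfold th; field_simp
  have h1 : q ^ 2 + 1 ≠ 0 := by positivity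
  have h2 : q ^ 4 + q ^ 2 + 1 ≠ 0 := by positivity
  have h0 : q ≠ 0 := hq.ne'
  unfold R1_31 R2_31 R3_31
  rw [hS, hT, htw, hth]
  refine ⟨?_, ?_, ?_⟩
  all_goals
    ext i j
    fin_cases i <;> fin_cases j <;>
      simp [Matrix.mul_apply, Fin.sum_univ_three] <;> field_simp <;> grind
end

section
/- Let q > 0 be real, let Lg be a natural number, let w : Fin Lg → Fin 3 be any word in the three generators and ε : Fin Lg → {1, −1} any choice of signs whose sum Σᵢ ε(i) is odd. Set M(q) = ∏ᵢ (R_{w(i)}^{[2,2]}(q))^{ε(i)} (ordered product of the 2×2 matrices and their inverses; each R_i^{[2,2]}(q) has determinant −1, hence is invertible). Then trace(M(q^{−1})) = −trace(M(q)). (This is the relation a_{[2,2]}(q^{−1}) = −a_{[2,2]}(q) for the character-expansion coefficient of any 4-strand braid of odd writhe.) -/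
/-- `R₁^{[2,2]}(q) = R₃^{[2,2]}(q) = diag(q, −q^{−1})`. -/
noncomputable def R1_22 (q : ℝ) : Matrix (Fin 2) (Fin 2) ℝ :=
  !![q, 0; 0, -q⁻¹]

/-- `R₂^{[2,2]}(q)`. -/
noncomputable def R2_22 (q : ℝ) : Matrix (Fin 2) (Fin 2) ℝ :=
  !![-1 / (q ^ 2 * tw q), -Real.sqrt (th q) / tw q;
     -Real.sqrt (th q) / tw q, q ^ 2 / tw q]

/-- The `[2,2]`-block of the generator `σ_{i+1}` of `B₄`, `i : Fin 3`
(`R₁^{[2,2]} = R₃^{[2,2]}`). -/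
noncomputable def R22 (i : Fin 3) (q : ℝ) : Matrix (Fin 2) (Fin 2) ℝ :=
  if i = 1 then R2_22 q else R1_22 q

/-- The `[2,2]`-block of the braid word `σ_{w(1)}^{ε(1)}⋯σ_{w(L)}^{ε(L)}`: the ordered
product of the matrices `R_{w(i)}^{[2,2]}(q)^{ε(i)}`. -/
noncomputable def M22 (Lg : ℕ) (w : Fin Lg → Fin 3) (ε : Fin Lg → ℤ) (q : ℝ) :
    Matrix (Fin 2) (Fin 2) ℝ :=
  (List.ofFn fun i : Fin Lg => R22 (w i) q ^ ε i).prod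

/-- The matrix conjugating `R(q)` into `-R(q⁻¹)`. -/
def J22 : Matrix (Fin 2) (Fin 2) ℝ := !![0, 1; -1, 0]

lemma J22_mul : J22 * J22 = -1 := by
  ext i j
  fin_cases i <;> fin_cases j <;> simp [J22]

lemma J22_inv : J22⁻¹ = -J22 := by
  apply Matrix.inv_eq_right_inv
  rw [mul_neg, J22_mul, neg_neg]

lemma R22_inv_q (q : ℝ) (hq : 0 < q) (i : Fin 3) : R22 i q⁻¹ = J22 * R22 i q * J22 := by
  have htw : tw q⁻¹ = tw q := by simp [tw, add_comm]
  have hth : th q⁻¹ = th q := by simp only [th, inv_inv]; ring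
  have h0 : tw q ≠ 0 := by unfold tw; positivity
  unfold R22
  split_ifs
  · unfold R2_22
    rw [htw, hth]
    ext a b
    fin_cases a <;> fin_cases b <;> simp [J22, Matrix.mul_apply, Fin.sum_univ_two] <;> field_simp
  · ext a b
    fin_cases a <;> fin_cases b <;> simp [R1_22, J22, Matrix.mul_apply, Fin.sum_univ_two]

lemma R22_zpow (q : ℝ) (hq : 0 < q) (i : Fin 3) (e : ℤ) (he : e = 1 ∨ e = -1) :
    R22 i q⁻¹ ^ e = J22 * R22 i q ^ e * J22 := by
  rcases he with rfl | rfl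
  · simpa using R22_inv_q q hq i
  · rw [Matrix.zpow_neg_one, Matrix.zpow_neg_one, R22_inv_q q hq i, Matrix.mul_inv_rev,
      Matrix.mul_inv_rev, J22_inv]
    simp [mul_assoc]

lemma M22_inv_q (q : ℝ) (hq : 0 < q) : ∀ (n : ℕ) (w : Fin n → Fin 3) (ε : Fin n → ℤ),
    (∀ i, ε i = 1 ∨ ε i = -1) →
    M22 n w ε q⁻¹ = (-1 : ℝ) ^ (n + 1) • (J22 * M22 n w ε q * J22) := by
  intro n
  induction n with
  | zero => intro w ε _; simp [M22, J22_mul]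
  | succ n ih =>
    intro w ε h
    have key := ih (fun i => w i.succ) (fun i => ε i.succ) (fun i => h i.succ)
    unfold M22 at key ⊢
    rw [List.ofFn_succ, List.prod_cons, List.ofFn_succ, List.prod_cons, key,
      R22_zpow q hq _ _ (h 0)]
    generalize (List.ofFn fun i : Fin n => R22 (w i.succ) q ^ ε i.succ).prod = P
    generalize R22 (w 0) q ^ ε 0 = A
    have : J22 * A * J22 * (J22 * P * J22) = -(J22 * (A * P) * J22) := by
      calc J22 * A * J22 * (J22 * P * J22) = J22 * A * (J22 * J22) * P * J22 := by
            simp only [mul_assoc]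
        _ = _ := by rw [J22_mul]; simp [mul_assoc]
    rw [mul_smul_comm, this, pow_succ _ (n + 1)]
    simp

lemma odd_length (n : ℕ) (ε : Fin n → ℤ) (h : ∀ i, ε i = 1 ∨ ε i = -1)
    (hodd : Odd (∑ i, ε i)) : Odd n := by
  have h2 : Even (∑ i, (ε i - 1)) := by
    apply Finset.even_sum
    intro i _
    rcases h i with h | h <;> rw [h] <;> decide
  rw [Finset.sum_sub_distrib] at h2
  simp at h2
  have := hodd.sub_even h2
  simpa using this

/-- For any 4-strand braid word of odd writhe, the character-expansion coefficient
`a_{[2,2]} = trace M(q)` satisfies `a_{[2,2]}(q^{−1}) = −a_{[2,2]}(q)`. -/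
theorem stmt15 (q : ℝ) (hq : 0 < q) (Lg : ℕ) (w : Fin Lg → Fin 3) (ε : Fin Lg → ℤ)
    (hε : ∀ i, ε i = 1 ∨ ε i = -1) (hodd : Odd (∑ i, ε i)) :
    Matrix.trace (M22 Lg w ε q⁻¹) = -Matrix.trace (M22 Lg w ε q) := by
  have hn : Even (Lg + 1) := (odd_length Lg ε hε hodd).add_one
  rw [M22_inv_q q hq Lg w ε hε, hn.neg_one_pow, one_smul, mul_assoc, Matrix.trace_mul_comm,
    mul_assoc, J22_mul]
  simp
end

section
/- Let k be a nonzero real number with cos(2π/k) ≠ 0, and set q = exp(2πi/k) ∈ ℂ, [2]_q = q + q^{−1} = 2cos(2π/k), and β = 1 + 2cos(4π/k) ∈ ℝ (so β = q² + 1 + q^{−2} = [3]_q). Let S = ((β : ℂ))^{1/2} / [2]_q, using the principal complex square root, and let R₂ be the 2×2 complex matrix with rows (−1/(q²[2]_q), −S) and (−S, q²/[2]_q). Then R₂ is unitary (i.e. R₂ · R₂† = 1) if and only if cos(4π/k) ≥ −1/2. -/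
open Complex Real

theorem aux17 (Q r : ℂ) (t β : ℝ) (hQ : Q * (starRingEnd ℂ) Q = 1) (ht : t ≠ 0)
    (hr : r * (starRingEnd ℂ) r = ((|β| : ℝ) : ℂ)) (htb : t ^ 2 = 1 + β)
    (hre : 0 ≤ β → (starRingEnd ℂ) r = r) (R : Matrix (Fin 2) (Fin 2) ℂ)
    (hR : R = !![-1 / (Q * (t : ℂ)), -(r / t); -(r / t), Q / (t : ℂ)]) :
    R * R.conjTranspose = 1 ↔ 0 ≤ β := by
  have htc : (t : ℂ) ≠ 0 := by exact_mod_cast ht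
  have hQ0 : Q ≠ 0 := by
    rintro rfl
    simp at hQ
  have hQs : (starRingEnd ℂ) Q = Q⁻¹ := eq_inv_of_mul_eq_one_right hQ
  have htbc : (t : ℂ) ^ 2 = 1 + β := by exact_mod_cast htb
  constructor
  · intro h
    have h0 := congrFun (congrFun h 0) 0
    simp [hR, Matrix.mul_apply, Fin.sum_univ_two, hQs] at h0
    have h1 : 1 + r * (starRingEnd ℂ) r = (t : ℂ) ^ 2 := by
      field_simp at h0
      linear_combination h0
    rw [hr, htbc] at h1
    have h2 : |β| = β := by
      have : 1 + |β| = 1 + β := by exact_mod_cast h1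
      linarith
    exact abs_eq_self.mp h2
  · intro h
    have hc := hre h
    rw [hc, abs_of_nonneg h] at hr
    ext i j
    fin_cases i <;> fin_cases j <;>
      simp [hR, Matrix.mul_apply, Fin.sum_univ_two, hQs, hc] <;> field_simp
    · linear_combination hr - htbc
    · ring
    · ring
    · linear_combination hr - htbc

theorem stmt17 (k : ℝ) (hk : k ≠ 0) (hcos : Real.cos (2 * π / k) ≠ 0) :
    let q : ℂ := Complex.exp (2 * π * Complex.I / k)
    let tw : ℂ := q + q⁻¹
    let β : ℝ := 1 + 2 * Real.cos (4 * π / k)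
    let S : ℂ := (β : ℂ) ^ (1 / 2 : ℂ) / tw
    let R₂ : Matrix (Fin 2) (Fin 2) ℂ := !![-1 / (q ^ 2 * tw), -S; -S, q ^ 2 / tw]
    (R₂ * R₂.conjTranspose = 1) ↔ -1 / 2 ≤ Real.cos (4 * π / k) := by
  intro q tw β S R₂
  have hq : q = Complex.exp (((2 * π / k : ℝ) : ℂ) * Complex.I) := by
    simp only [q]
    congr 1
    push_cast
    ring
  have htw : tw = ((2 * Real.cos (2 * π / k) : ℝ) : ℂ) := by
    simp only [tw]
    rw [hq, ← Complex.exp_neg, Complex.ofReal_mul, Complex.ofReal_cos, Complex.cos]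
    push_cast
    ring_nf
  have hqq : q * (starRingEnd ℂ) q = 1 := by
    rw [Complex.mul_conj, Complex.normSq_eq_norm_sq, hq, Complex.norm_exp_ofReal_mul_I]
    simp
  have hsq : ((β : ℂ) ^ (1 / 2 : ℂ)) ^ 2 = β := by
    rw [one_div]
    exact_mod_cast Complex.cpow_nat_inv_pow (β : ℂ) (two_ne_zero)
  have key := aux17 (q ^ 2) ((β : ℂ) ^ (1 / 2 : ℂ)) (2 * Real.cos (2 * π / k)) β
    (by rw [map_pow, ← mul_pow, hqq, one_pow]) (by simpa using hcos)
    (by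
      rw [Complex.mul_conj, Complex.normSq_eq_norm_sq, ← norm_pow, hsq, Complex.norm_real,
        Real.norm_eq_abs])
    (by
      have : 4 * π / k = 2 * (2 * π / k) := by ring
      simp only [β]
      rw [this, Real.cos_two_mul]
      ring)
    (by
      intro h
      have : (β : ℂ) ^ (1 / 2 : ℂ) = ((β ^ (1 / 2 : ℝ) : ℝ) : ℂ) := by
        rw [Complex.ofReal_cpow h]
        norm_num
      rw [this, Complex.conj_ofReal])
    R₂ (by simp only [R₂, S, htw])
  rw [key]
  simp only [β]
  constructor <;> intro h <;> linarith
end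

section
/- For every nonzero real number k: (i) cos(4π/k) ≥ −1/2 if and only if k ≥ 6, or k ≤ −6, or there exists a nonzero integer z with 6/(1+3z) ≤ k ≤ 6/(−1+3z); and (ii) cos(4π/k) ≥ 0 if and only if k ≥ 8, or k ≤ −8, or there exists a nonzero integer z with 8/(1+4z) ≤ k ≤ 8/(−1+4z). (These characterize the sets of k for which the 3-strand, respectively 4-strand, fundamental R-matrices are unitary at q = exp(2πi/k).) -/
open Real

theorem cos_ge_aux (a θ : ℝ) (ha : 0 ≤ a) (ha' : a ≤ π) :
    Real.cos a ≤ Real.cos θ ↔ ∃ z : ℤ, |θ - z * (2 * π)| ≤ a := by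
  have hpi := Real.pi_pos
  constructor
  · intro h
    refine ⟨round (θ / (2 * π)), ?_⟩
    have h1 := abs_sub_round (θ / (2 * π))
    set z := round (θ / (2 * π))
    have h2 : |θ - z * (2 * π)| ≤ π := by
      have : θ - z * (2 * π) = (θ / (2 * π) - z) * (2 * π) := by field_simp
      rw [this, abs_mul, abs_of_pos (by positivity : (0:ℝ) < 2 * π)]
      nlinarith
    by_contra! hc
    have h3 := Real.cos_lt_cos_of_nonneg_of_le_pi ha h2 hc
    rw [Real.cos_abs, Real.cos_sub_int_mul_two_pi] at h3
    linarith
  · rintro ⟨z, hz⟩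
    have h3 := Real.cos_le_cos_of_nonneg_of_le_pi (abs_nonneg _) ha' hz
    rwa [Real.cos_abs, Real.cos_sub_int_mul_two_pi] at h3

theorem region_aux (n k : ℝ) (hn : 2 ≤ n) (hk : k ≠ 0) :
    Real.cos (2 * π / n) ≤ Real.cos (4 * π / k) ↔
      2 * n ≤ k ∨ k ≤ -(2 * n) ∨
        ∃ z : ℤ, z ≠ 0 ∧ 2 * n / (1 + n * (z : ℝ)) ≤ k ∧ k ≤ 2 * n / (-1 + n * (z : ℝ)) := by
  have hpi := Real.pi_pos
  have hn0 : 0 < n := by linarith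
  have key : ∀ z : ℤ, |4 * π / k - z * (2 * π)| ≤ 2 * π / n ↔
      (n * z - 1 ≤ 2 * n / k ∧ 2 * n / k ≤ n * z + 1) := by
    intro z
    have e : 4 * π / k - z * (2 * π) = (2 * n / k - n * z) * (2 * π / n) := by
      field_simp
      ring
    have hp : 0 < 2 * π / n := by positivity
    rw [e, abs_mul, abs_of_pos hp, mul_le_iff_le_one_left hp, abs_le]
    constructor <;> rintro ⟨h1, h2⟩ <;> constructor <;> linarith
  rw [cos_ge_aux _ _ (by positivity) (by rw [div_le_iff₀ hn0]; nlinarith)]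
  simp only [key]
  have pos : ∀ z : ℤ, 0 < z → (1:ℝ) < n * z := by
    intro z hz
    have : (1:ℝ) ≤ z := by exact_mod_cast hz
    nlinarith
  have neg : ∀ z : ℤ, z < 0 → n * (z:ℝ) < -1 := by
    intro z hz
    have : (z:ℝ) ≤ -1 := by exact_mod_cast (show z ≤ -1 by omega)
    nlinarith
  constructor
  · rintro ⟨z, h1, h2⟩
    rcases lt_trichotomy z 0 with hz | rfl | hz
    · have hz' := neg z hz
      have hk0 : k < 0 := by
        by_contra! hc
        have : 0 ≤ 2 * n / k := by positivity
        linarith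
      refine Or.inr (Or.inr ⟨z, hz.ne, ?_, ?_⟩)
      · rw [div_le_iff_of_neg (by linarith)]
        rw [div_le_iff_of_neg hk0] at h2
        linarith
      · rw [le_div_iff_of_neg (by linarith)]
        rw [le_div_iff_of_neg hk0] at h1
        linarith
    · simp only [Int.cast_zero, mul_zero, zero_sub, zero_add] at h1 h2
      rcases lt_or_gt_of_ne hk with hk0 | hk0
      · rw [le_div_iff_of_neg hk0] at h1
        right; left; linarith
      · rw [div_le_iff₀ hk0] at h2
        left; linarith
    · have hz' := pos z hz
      have hk0 : 0 < k := by
        by_contra! hc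
        have : 2 * n / k ≤ 0 := div_nonpos_of_nonneg_of_nonpos (by positivity) hc
        linarith
      refine Or.inr (Or.inr ⟨z, hz.ne', ?_, ?_⟩)
      · rw [div_le_iff₀ (by linarith)]
        rw [div_le_iff₀ hk0] at h2
        linarith
      · rw [le_div_iff₀ (by linarith)]
        rw [le_div_iff₀ hk0] at h1
        linarith
  · rintro (h | h | ⟨z, hz, h1, h2⟩)
    · have hk0 : 0 < k := by linarith
      refine ⟨0, ?_, ?_⟩
      · rw [le_div_iff₀ hk0]; push_cast; linarith
      · rw [div_le_iff₀ hk0]; push_cast; linarith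
    · have hk0 : k < 0 := by linarith
      refine ⟨0, ?_, ?_⟩
      · rw [le_div_iff_of_neg hk0]; push_cast; linarith
      · rw [div_le_iff_of_neg hk0]; push_cast; linarith
    · refine ⟨z, ?_⟩
      rcases lt_or_gt_of_ne hz with hz | hz
      · have hz' := neg z hz
        have hk0 : k < 0 := lt_of_le_of_lt h2
          (div_neg_of_pos_of_neg (by positivity) (by linarith))
        rw [div_le_iff_of_neg (by linarith)] at h1
        rw [le_div_iff_of_neg (by linarith)] at h2
        rw [le_div_iff_of_neg hk0, div_le_iff_of_neg hk0]
        constructor <;> linarith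
      · have hz' := pos z hz
        have hk0 : 0 < k := lt_of_lt_of_le (div_pos (by positivity) (by linarith)) h1
        rw [div_le_iff₀ (by linarith)] at h1
        rw [le_div_iff₀ (by linarith)] at h2
        rw [le_div_iff₀ hk0, div_le_iff₀ hk0]
        constructor <;> linarith


/-- The regions of real `k` where the 3-strand (resp. 4-strand) fundamental
`R`-matrices are unitary at `q = exp(2πi/k)`:
`cos(4π/k) ≥ −1/2` iff `k ≥ 6`, or `k ≤ −6`, or `6/(1+3z) ≤ k ≤ 6/(−1+3z)` for some
nonzero integer `z`; and `cos(4π/k) ≥ 0` iff `k ≥ 8`, or `k ≤ −8`, or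
`8/(1+4z) ≤ k ≤ 8/(−1+4z)` for some nonzero integer `z`. -/
theorem stmt18 (k : ℝ) (hk : k ≠ 0) :
    (-1 / 2 ≤ Real.cos (4 * π / k) ↔
      6 ≤ k ∨ k ≤ -6 ∨
        ∃ z : ℤ, z ≠ 0 ∧ 6 / (1 + 3 * (z : ℝ)) ≤ k ∧ k ≤ 6 / (-1 + 3 * (z : ℝ))) ∧
    (0 ≤ Real.cos (4 * π / k) ↔
      8 ≤ k ∨ k ≤ -8 ∨
        ∃ z : ℤ, z ≠ 0 ∧ 8 / (1 + 4 * (z : ℝ)) ≤ k ∧ k ≤ 8 / (-1 + 4 * (z : ℝ))) := by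
  have h3 := region_aux 3 k (by norm_num) hk
  have h4 := region_aux 4 k (by norm_num) hk
  have c3 : Real.cos (2 * π / 3) = -1 / 2 := by
    rw [show 2 * π / 3 = π - π / 3 by ring, Real.cos_pi_sub, Real.cos_pi_div_three]
    norm_num
  have c4 : Real.cos (2 * π / 4) = 0 := by
    rw [show 2 * π / 4 = π / 2 by ring, Real.cos_pi_div_two]
  rw [c3] at h3
  rw [c4] at h4
  norm_num only at h3 h4 ⊢
  exact ⟨h3, h4⟩
end
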